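/- Fix δ₀, ρ₀ ∈ (0,1), set α₀ = (1−ρ₀)(1−δ₀)²/ρ₀ and β₀ = (1−ρ₀)(1−δ₀)/ρ₀, and for n ≥ 3 define t_n = δ₀√(2(1−ρ₀)log n), c_n = √(2(1−ρ₀)log(n)/ρ₀) · (1 − δ₀ − (1/4)·log log n / log n), and ψ_n(s) = φ(s) · Φ((t_n − √ρ₀ s)/√(1−ρ₀))^n. Then there is a constant C > 0 depending only on (δ₀, ρ₀) such that for all sufficiently large n, ∫_{−∞}^{−c_n} ψ_n(s) ds ≤ C · n^{−α₀} · (log n)^{(β₀−1)/2}. -/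

import Mathlib

open MeasureTheory Real Filter

/-- The standard normal density `φ`. -/
noncomputable def stdNormalPDF (s : ℝ) : ℝ :=
  (Real.sqrt (2 * Real.pi))⁻¹ * Real.exp (-s ^ 2 / 2)

/-- The standard normal distribution function `Φ`. -/
noncomputable def stdNormalCDF (x : ℝ) : ℝ :=
  ∫ s in Set.Iic x, stdNormalPDF s

/-- `t_n = δ₀ √(2(1−ρ₀) log n)`. -/
noncomputable def tN (δ₀ ρ₀ : ℝ) (n : ℕ) : ℝ :=
  δ₀ * Real.sqrt (2 * (1 - ρ₀) * Real.log n)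

/-- `c_n = √(2(1−ρ₀)log(n)/ρ₀) · (1 − δ₀ − (1/4)·log log n / log n)`. -/
noncomputable def cN (δ₀ ρ₀ : ℝ) (n : ℕ) : ℝ :=
  Real.sqrt (2 * (1 - ρ₀) * Real.log n / ρ₀) *
    (1 - δ₀ - (1 / 4) * Real.log (Real.log n) / Real.log n)

/-- `ψ_n(s) = φ(s) · Φ((t_n − √ρ₀ s)/√(1−ρ₀))^n`. -/
noncomputable def psiN (δ₀ ρ₀ : ℝ) (n : ℕ) (s : ℝ) : ℝ :=
  stdNormalPDF s *
    stdNormalCDF ((tN δ₀ ρ₀ n - Real.sqrt ρ₀ * s) / Real.sqrt (1 - ρ₀)) ^ n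

theorem aux_pdf_nonneg (s : ℝ) : 0 ≤ stdNormalPDF s := by
  unfold stdNormalPDF; positivity

theorem aux_pdf_eq : stdNormalPDF =
    fun s => (Real.sqrt (2 * Real.pi))⁻¹ * Real.exp (-(1 / 2) * s ^ 2) := by
  funext s
  unfold stdNormalPDF
  congr 2
  ring

theorem aux_pdf_integrable : Integrable stdNormalPDF := by
  rw [aux_pdf_eq]
  exact (integrable_exp_neg_mul_sq (by norm_num)).const_mul _

theorem aux_pdf_integral : ∫ s, stdNormalPDF s = 1 := by
  rw [aux_pdf_eq, integral_const_mul, integral_gaussian]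
  rw [show Real.pi / (1 / 2) = 2 * Real.pi by ring]
  exact inv_mul_cancel₀ (by positivity)

theorem aux_cdf_nonneg (x : ℝ) : 0 ≤ stdNormalCDF x :=
  integral_nonneg fun s => aux_pdf_nonneg s

theorem aux_cdf_le_one (x : ℝ) : stdNormalCDF x ≤ 1 := by
  rw [← aux_pdf_integral]
  exact setIntegral_le_integral aux_pdf_integrable
    (Eventually.of_forall fun s => aux_pdf_nonneg s)

theorem aux_tail (δ₀ ρ₀ : ℝ) (n : ℕ) (c : ℝ) (hc : 0 < c) :
    ∫ s in Set.Iic (-c), psiN δ₀ ρ₀ n s ≤ Real.exp (-c ^ 2 / 2) / c := by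
  have hpi : (Real.sqrt (2 * Real.pi))⁻¹ ≤ 1 := by
    apply inv_le_one_of_one_le₀
    rw [Real.one_le_sqrt]
    nlinarith [Real.pi_gt_three]
  have h1 : ∫ s in Set.Iic (-c), psiN δ₀ ρ₀ n s
      ≤ ∫ s in Set.Iic (-c), Real.exp (c ^ 2 / 2) * Real.exp (c * s) := by
    apply integral_mono_of_nonneg
    · exact Eventually.of_forall fun s =>
        mul_nonneg (aux_pdf_nonneg s) (pow_nonneg (aux_cdf_nonneg _) n)
    · exact (integrableOn_exp_mul_Iic hc _).const_mul _
    · refine Eventually.of_forall fun s => ?_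
      have h2 : psiN δ₀ ρ₀ n s ≤ stdNormalPDF s :=
        mul_le_of_le_one_right (aux_pdf_nonneg s)
          (pow_le_one₀ (aux_cdf_nonneg _) (aux_cdf_le_one _))
      have h3 : stdNormalPDF s ≤ Real.exp (-s ^ 2 / 2) :=
        mul_le_of_le_one_left (Real.exp_pos _).le hpi
      refine (h2.trans h3).trans ?_
      show _ ≤ Real.exp (c ^ 2 / 2) * Real.exp (c * s)
      rw [← Real.exp_add]
      apply Real.exp_le_exp.2
      nlinarith [sq_nonneg (s + c)]
  refine h1.trans (le_of_eq ?_)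
  rw [integral_const_mul, integral_exp_mul_Iic hc, ← mul_div_assoc, ← Real.exp_add]
  congr 2
  ring

theorem psi_integral_far_left_tail_upper_bound (δ₀ ρ₀ : ℝ)
    (hδ : δ₀ ∈ Set.Ioo (0 : ℝ) 1) (hρ : ρ₀ ∈ Set.Ioo (0 : ℝ) 1) :
    ∃ C : ℝ, 0 < C ∧
      ∀ᶠ n : ℕ in atTop,
        ∫ s in Set.Iic (-(cN δ₀ ρ₀ n)), psiN δ₀ ρ₀ n s
          ≤ C * (n : ℝ) ^ (-((1 - ρ₀) * (1 - δ₀) ^ 2 / ρ₀))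
              * Real.log n ^ (((1 - ρ₀) * (1 - δ₀) / ρ₀ - 1) / 2) := by
  obtain ⟨hδ0, hδ1⟩ := hδ
  obtain ⟨hρ0, hρ1⟩ := hρ
  have hd : 0 < 1 - δ₀ := by linarith
  have hr : 0 < 1 - ρ₀ := by linarith
  obtain ⟨K, hK⟩ : ∃ K, K = Real.sqrt (2 * (1 - ρ₀) / ρ₀) * ((1 - δ₀) / 2) := ⟨_, rfl⟩
  have hKpos : 0 < K := by rw [hK]; positivity
  refine ⟨K⁻¹, by positivity, ?_⟩
  have hlog : Tendsto (fun n : ℕ => Real.log (n : ℝ)) atTop atTop :=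
    Real.tendsto_log_atTop.comp tendsto_natCast_atTop_atTop
  have hll : ∀ᶠ x : ℝ in atTop, ‖Real.log x‖ ≤ (1 - δ₀) * ‖x‖ :=
    Real.isLittleO_log_id_atTop.bound hd
  filter_upwards [hlog.eventually hll, hlog.eventually_ge_atTop 1, eventually_ge_atTop 1]
    with n h1 h2 h3
  have hn : (0 : ℝ) < n := by exact_mod_cast h3
  unfold cN
  obtain ⟨L, hL⟩ : ∃ L, L = Real.log (n : ℝ) := ⟨_, rfl⟩
  rw [Real.rpow_def_of_pos hn]
  rw [← hL] at h1 h2 ⊢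
  have hLpos : 0 < L := by linarith
  rw [Real.rpow_def_of_pos hLpos]
  obtain ⟨l, hl⟩ : ∃ l, l = Real.log L := ⟨_, rfl⟩
  rw [← hl] at h1 ⊢
  rw [Real.norm_of_nonneg hLpos.le] at h1
  have h4 : l ≤ (1 - δ₀) * L := (le_abs_self l).trans h1
  have h5 : 1 / 4 * l / L ≤ (1 - δ₀) / 4 := by
    rw [div_le_iff₀ hLpos]; linarith
  have hsplit : Real.sqrt (2 * (1 - ρ₀) * L / ρ₀)
      = Real.sqrt (2 * (1 - ρ₀) / ρ₀) * Real.sqrt L := by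
    rw [← Real.sqrt_mul (by positivity)]; congr 1; ring
  have hsqrtL : Real.sqrt L = Real.exp (l / 2) := by
    rw [← Real.exp_log hLpos, ← hl, Real.exp_half]
  obtain ⟨c, hc⟩ : ∃ c, c = Real.sqrt (2 * (1 - ρ₀) * L / ρ₀) *
    (1 - δ₀ - 1 / 4 * l / L) := ⟨_, rfl⟩
  rw [← hc]
  have hcK : K * Real.exp (l / 2) ≤ c := by
    rw [hc, hK, hsplit, ← hsqrtL, mul_right_comm]
    apply mul_le_mul_of_nonneg_left _ (by positivity)
    linarith
  have hcpos : 0 < c := lt_of_lt_of_le (by positivity) hcK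
  have hc2 : c ^ 2 = 2 * (1 - ρ₀) * L / ρ₀ * (1 - δ₀ - 1 / 4 * l / L) ^ 2 := by
    rw [hc, mul_pow, Real.sq_sqrt (by positivity)]
  have hexp : -c ^ 2 / 2 ≤ L * -((1 - ρ₀) * (1 - δ₀) ^ 2 / ρ₀)
      + l * ((1 - ρ₀) * (1 - δ₀) / ρ₀) / 2 := by
    have : L * -((1 - ρ₀) * (1 - δ₀) ^ 2 / ρ₀)
      + l * ((1 - ρ₀) * (1 - δ₀) / ρ₀) / 2 - (-c ^ 2 / 2)
        = (1 - ρ₀) / ρ₀ * (l ^ 2 / (16 * L)) := by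
      rw [hc2]; field_simp; ring
    have : 0 ≤ (1 - ρ₀) / ρ₀ * (l ^ 2 / (16 * L)) := by positivity
    linarith
  refine (aux_tail δ₀ ρ₀ n c hcpos).trans ?_
  calc Real.exp (-c ^ 2 / 2) / c
      ≤ Real.exp (L * -((1 - ρ₀) * (1 - δ₀) ^ 2 / ρ₀)
      + l * ((1 - ρ₀) * (1 - δ₀) / ρ₀) / 2) / (K * Real.exp (l / 2)) := by
        gcongr
    _ = _ := by
        rw [div_eq_mul_inv, mul_inv, ← Real.exp_neg, mul_left_comm, ← Real.exp_add,
          mul_assoc K⁻¹, ← Real.exp_add]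
        congr 2
        ring
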